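/- Let ω be a minuscule weight, I = {α ∈ S : ⟨ω, α∨⟩ = 0} and W^I = {w ∈ W : w(α) > 0 for all α ∈ I}. Then for all τ, σ ∈ W^I: τ(ω) ≤ σ(ω) if and only if σ ≤ τ, i.e., if and only if ℓ(τ) = ℓ(σ) + ℓ(τσ^{−1}). -/

import Mathlib

open scoped RealInnerProductSpace

/-- A finite reduced crystallographic root system `Φ` spanning a real inner product
space `V`, together with a fixed base of simple roots `α 0, …, α (l-1)`: every root is
a nonnegative or nonpositive integral combination of the simple roots.  The simple
reflections `s i` are given by the usual formula `s_α(λ) = λ − ⟨λ, α∨⟩ α`. -/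
structure RootSystemWithBase (V : Type*) [NormedAddCommGroup V] [InnerProductSpace ℝ V] where
  l : ℕ
  Φ : Finset V
  α : Fin l → V
  s : Fin l → V ≃ₗ[ℝ] V
  α_mem : ∀ i, α i ∈ Φ
  root_ne_zero : ∀ β ∈ Φ, β ≠ (0 : V)
  root_span : Submodule.span ℝ (Φ : Set V) = ⊤
  simple_indep : LinearIndependent ℝ α
  crystallographic : ∀ β ∈ Φ, ∀ γ ∈ Φ, ∃ z : ℤ, 2 * ⟪β, γ⟫ / ⟪γ, γ⟫ = (z : ℝ)
  reduced : ∀ β ∈ Φ, ∀ c : ℝ, c • β ∈ Φ → c = 1 ∨ c = -1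
  base : ∀ β ∈ Φ,
    (∃ c : Fin l → ℤ, (∀ i, 0 ≤ c i) ∧ β = ∑ i, (c i : ℝ) • α i) ∨
    (∃ c : Fin l → ℤ, (∀ i, 0 ≤ c i) ∧ β = -(∑ i, (c i : ℝ) • α i))
  s_apply : ∀ i v, s i v = v - (2 * ⟪v, α i⟫ / ⟪α i, α i⟫) • α i
  s_root : ∀ β ∈ Φ, ∀ i, s i β ∈ Φ

namespace RootSystemWithBase

variable {V : Type*} [NormedAddCommGroup V] [InnerProductSpace ℝ V]

/-- The pairing `⟨λ, β∨⟩ = 2(λ,β)/(β,β)`. -/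
noncomputable def pairing (_D : RootSystemWithBase V) (lam β : V) : ℝ :=
  2 * ⟪lam, β⟫ / ⟪β, β⟫

/-- The Weyl group: the subgroup of `GL(V)` generated by the simple reflections. -/
def W (D : RootSystemWithBase V) : Subgroup (V ≃ₗ[ℝ] V) := Subgroup.closure (Set.range D.s)

/-- The product `s_{i₁} · s_{i₂} ⋯ s_{i_k}` of simple reflections along a word. -/
def wordProd (D : RootSystemWithBase V) (L : List (Fin D.l)) : V ≃ₗ[ℝ] V := (L.map D.s).prod

/-- The length `ℓ(w)`: the least `k` such that `w` is a product of `k` simple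
reflections. -/
noncomputable def len (D : RootSystemWithBase V) (w : V ≃ₗ[ℝ] V) : ℕ :=
  sInf {k | ∃ L : List (Fin D.l), L.length = k ∧ D.wordProd L = w}

/-- `v` is a linear combination of the simple roots with all coefficients `≥ 0`. -/
def IsNonnegComb (D : RootSystemWithBase V) (v : V) : Prop :=
  ∃ c : Fin D.l → ℝ, (∀ i, 0 ≤ c i) ∧ v = ∑ i, c i • D.α i

/-- `v > 0`: a nonzero nonnegative combination of the simple roots. -/
def IsPos (D : RootSystemWithBase V) (v : V) : Prop := D.IsNonnegComb v ∧ v ≠ 0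

/-- `x ≤ y` for vectors: `y − x` is a nonnegative combination of the simple roots. -/
def vle (D : RootSystemWithBase V) (x y : V) : Prop := D.IsNonnegComb (y - x)

/-- `λ` is dominant: `⟨λ, αᵢ∨⟩ ≥ 0` for all `i`. -/
def IsDominant (D : RootSystemWithBase V) (lam : V) : Prop :=
  ∀ i, 0 ≤ D.pairing lam (D.α i)

/-- `ω` is minuscule: dominant with `⟨ω, β∨⟩ ∈ {−1, 0, 1}` for every root `β`. -/
def IsMinuscule (D : RootSystemWithBase V) (ω : V) : Prop :=
  D.IsDominant ω ∧ ∀ β ∈ D.Φ, D.pairing ω β = -1 ∨ D.pairing ω β = 0 ∨ D.pairing ω β = 1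

/-- `W^I = {w ∈ W : w(α) > 0 for all α ∈ I}` where `I = {α ∈ S : ⟨ω, α∨⟩ = 0}`. -/
def WI (D : RootSystemWithBase V) (ω : V) : Set (V ≃ₗ[ℝ] V) :=
  {w | w ∈ D.W ∧ ∀ i, D.pairing ω (D.α i) = 0 → D.IsPos (w (D.α i))}

/-- `w ≤ τ` in `W`:  `ℓ(τ) = ℓ(w) + ℓ(τ w⁻¹)`. -/
def wle (D : RootSystemWithBase V) (w τ : V ≃ₗ[ℝ] V) : Prop :=
  D.len τ = D.len w + D.len (τ * w⁻¹)

end RootSystemWithBase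

/-!
A simple reflection `s i` moves `w ω` by `-⟨w ω, α i∨⟩ α i`, and for dominant `ω` the sign of this
coefficient tells whether `s i * w` is longer or shorter than `w`. Hence weights only go down along
a length-increasing chain of left multiplications, which is one direction, for any dominant `ω`.

For minuscule `ω` the coefficient is `-1`, `0` or `1`, so each step changes the height by at most
one. If `σ ω - τ ω` is a nonzero nonnegative combination of simple roots, some `α i` in its support
has `⟨σ ω, α i∨⟩ > ⟨τ ω, α i∨⟩`, and therefore `⟨σ ω, α i∨⟩ = 1` or `⟨τ ω, α i∨⟩ = -1`. Replacing
`σ` by the longer `s i * σ`, respectively `τ` by the shorter `s i * τ`, stays in `W^I` and lowers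
the height of the difference by one. The induction ends at `τ ω = σ ω`, where `τ = σ` because
`w ↦ w ω` is injective on `W^I`.
-/

namespace RootSystemWithBase

variable {V : Type*} [NormedAddCommGroup V] [InnerProductSpace ℝ V]

section SimpleRoots

variable (D : RootSystemWithBase V)

lemma span_range_α : Submodule.span ℝ (Set.range D.α) = ⊤ := by
  rw [eq_top_iff, ← D.root_span, Submodule.span_le]
  intro β hβ
  have sum_mem_span (c : Fin D.l → ℤ) :
      ∑ i, (c i : ℝ) • D.α i ∈ Submodule.span ℝ (Set.range D.α) :=
    sum_mem fun i _ => Submodule.smul_mem _ _ (Submodule.subset_span ⟨i, rfl⟩)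
  rcases D.base β hβ with ⟨c, -, rfl⟩ | ⟨c, -, rfl⟩
  · exact sum_mem_span c
  · exact neg_mem (sum_mem_span c)

/-- The simple roots as a basis of `V`; its coordinates are the coefficients that decide
positivity. -/
noncomputable def simpleBasis : Module.Basis (Fin D.l) ℝ V :=
  Module.Basis.mk D.simple_indep D.span_range_α.ge

@[simp]
lemma simpleBasis_apply (i : Fin D.l) : D.simpleBasis i = D.α i :=
  Module.Basis.mk_apply _ _ i

lemma repr_α (i : Fin D.l) : D.simpleBasis.repr (D.α i) = Finsupp.single i 1 := by
  rw [← simpleBasis_apply, Module.Basis.repr_self]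

lemma sum_repr_smul_α (v : V) : ∑ i, D.simpleBasis.repr v i • D.α i = v := by
  simpa only [simpleBasis_apply] using D.simpleBasis.sum_repr v

lemma inner_eq_sum_repr (u v : V) : ⟪u, v⟫ = ∑ i, D.simpleBasis.repr v i * ⟪u, D.α i⟫ := by
  conv_lhs => rw [← D.sum_repr_smul_α v, inner_sum]
  simp only [real_inner_smul_right]

lemma isNonnegComb_iff_repr {v : V} : D.IsNonnegComb v ↔ ∀ i, 0 ≤ D.simpleBasis.repr v i := by
  constructor
  · rintro ⟨c, hc, rfl⟩ i
    simpa only [← simpleBasis_apply, Module.Basis.repr_sum_self] using hc i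
  · exact fun h => ⟨_, h, (D.sum_repr_smul_α v).symm⟩

lemma isNonnegComb_zero : D.IsNonnegComb 0 := by
  simp [isNonnegComb_iff_repr]

lemma isNonnegComb_α (i : Fin D.l) : D.IsNonnegComb (D.α i) := by
  rw [isNonnegComb_iff_repr, repr_α]
  exact fun j => Finsupp.single_nonneg.mpr zero_le_one j

variable {D}

lemma IsNonnegComb.add {u v : V} (hu : D.IsNonnegComb u) (hv : D.IsNonnegComb v) :
    D.IsNonnegComb (u + v) := by
  rw [isNonnegComb_iff_repr] at *
  intro i
  simpa using add_nonneg (hu i) (hv i)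

lemma IsNonnegComb.smul {r : ℝ} {v : V} (hr : 0 ≤ r) (hv : D.IsNonnegComb v) :
    D.IsNonnegComb (r • v) := by
  rw [isNonnegComb_iff_repr] at *
  intro i
  simpa using mul_nonneg hr (hv i)

lemma IsNonnegComb.sum {ι : Type*} {s : Finset ι} {f : ι → V}
    (hf : ∀ i ∈ s, D.IsNonnegComb (f i)) : D.IsNonnegComb (∑ i ∈ s, f i) :=
  Finset.sum_induction f D.IsNonnegComb (fun _ _ => IsNonnegComb.add) D.isNonnegComb_zero hf

lemma IsNonnegComb.eq_zero_of_neg {v : V} (hv : D.IsNonnegComb v) (hv' : D.IsNonnegComb (-v)) :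
    v = 0 := by
  rw [isNonnegComb_iff_repr] at hv hv'
  refine D.simpleBasis.ext_elem fun i => ?_
  have := hv' i
  simp only [map_neg, Finsupp.neg_apply, Left.nonneg_neg_iff] at this
  simpa using le_antisymm this (hv i)

lemma isNonnegComb_or_neg {β : V} (hβ : β ∈ D.Φ) :
    D.IsNonnegComb β ∨ D.IsNonnegComb (-β) := by
  rcases D.base β hβ with ⟨c, hc, rfl⟩ | ⟨c, hc, rfl⟩
  · exact Or.inl ⟨_, fun i => Int.cast_nonneg (hc i), rfl⟩
  · exact Or.inr ⟨_, fun i => Int.cast_nonneg (hc i), neg_neg _⟩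

lemma vle.trans {u v w : V} (huv : D.vle u v) (hvw : D.vle v w) : D.vle u w := by
  simpa only [vle, sub_add_sub_cancel] using IsNonnegComb.add hvw huv

/-- Since `⟪v, v⟫ > 0` is a nonnegative combination of the numbers `⟪v, α i⟫`, one of them is
positive. -/
lemma IsNonnegComb.exists_inner_pos {v : V} (hv : D.IsNonnegComb v) (hv0 : v ≠ 0) :
    ∃ i, 0 < D.simpleBasis.repr v i ∧ 0 < ⟪v, D.α i⟫ := by
  have hsum : 0 < ∑ i, D.simpleBasis.repr v i * ⟪v, D.α i⟫ := by
    rw [← inner_eq_sum_repr]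
    exact real_inner_self_pos.mpr hv0
  obtain ⟨i, hi⟩ : ∃ i, 0 < D.simpleBasis.repr v i * ⟪v, D.α i⟫ := by
    by_contra! h
    exact hsum.not_ge (Finset.sum_nonpos fun i _ => h i)
  exact ⟨i, (pos_and_pos_or_neg_and_neg_of_mul_pos hi).resolve_right
    fun h => h.1.not_ge (D.isNonnegComb_iff_repr.mp hv i)⟩

end SimpleRoots

section RootLattice

variable (D : RootSystemWithBase V)

/-- The root lattice: the integral combinations of the simple roots. -/
def rootLattice : Submodule ℤ V := Submodule.span ℤ (Set.range D.α)

/-- The height of a vector: the sum of its coefficients on the simple roots. -/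
noncomputable def height : V →ₗ[ℝ] ℝ := D.simpleBasis.sumCoords

lemma height_α (i : Fin D.l) : D.height (D.α i) = 1 := by
  rw [← simpleBasis_apply, height, Module.Basis.sumCoords_self_apply]

lemma height_eq_sum_repr (v : V) : D.height v = ∑ i, D.simpleBasis.repr v i := by
  rw [height, Module.Basis.coe_sumCoords_of_fintype]
  simp

lemma mem_rootLattice_iff_repr {v : V} :
    v ∈ D.rootLattice ↔ ∀ i, ∃ z : ℤ, (z : ℝ) = D.simpleBasis.repr v i := by
  have hrange : Set.range D.simpleBasis = Set.range D.α := by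
    simp only [funext D.simpleBasis_apply]
  rw [rootLattice, ← hrange, Module.Basis.mem_span_iff_repr_mem]
  rfl

variable {D}

lemma IsNonnegComb.eq_zero_of_height {v : V} (hv : D.IsNonnegComb v) (h : D.height v = 0) :
    v = 0 := by
  rw [height_eq_sum_repr, Finset.sum_eq_zero_iff_of_nonneg
    fun i _ => D.isNonnegComb_iff_repr.mp hv i] at h
  exact D.simpleBasis.ext_elem fun i => by simpa using h i (Finset.mem_univ i)

lemma IsNonnegComb.exists_height_eq_natCast {v : V} (hv : D.IsNonnegComb v)
    (hL : v ∈ D.rootLattice) : ∃ m : ℕ, D.height v = m := by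
  choose z hz using D.mem_rootLattice_iff_repr.mp hL
  have hz0 (i : Fin D.l) : 0 ≤ z i := by
    exact_mod_cast hz i ▸ D.isNonnegComb_iff_repr.mp hv i
  lift z to Fin D.l → ℕ using hz0
  exact ⟨∑ i, z i, by simp [height_eq_sum_repr, ← hz]⟩

lemma IsNonnegComb.sub_α {v : V} (hv : D.IsNonnegComb v) (hL : v ∈ D.rootLattice) {i : Fin D.l}
    (hi : 0 < D.simpleBasis.repr v i) : D.IsNonnegComb (v - D.α i) := by
  rw [isNonnegComb_iff_repr] at *
  intro j
  rw [map_sub, Finsupp.sub_apply, repr_α, sub_nonneg]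
  rcases eq_or_ne i j with rfl | hij
  · obtain ⟨z, hz⟩ := D.mem_rootLattice_iff_repr.mp hL i
    rw [← hz] at hi ⊢
    rw [Finsupp.single_eq_same]
    exact_mod_cast hi
  · rw [Finsupp.single_eq_of_ne hij.symm]
    exact hv j

end RootLattice

section Pairing

variable (D : RootSystemWithBase V)

lemma pairing_pos_iff (v β : V) : 0 < D.pairing v β ↔ 0 < ⟪v, β⟫ := by
  rcases eq_or_ne β 0 with rfl | hβ
  · simp [pairing]
  · rw [pairing, div_pos_iff_of_pos_right (real_inner_self_pos.mpr hβ),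
      mul_pos_iff_of_pos_left two_pos]

lemma pairing_neg_right (v β : V) : D.pairing v (-β) = -D.pairing v β := by
  simp [pairing, neg_div]

lemma pairing_neg_iff (v β : V) : D.pairing v β < 0 ↔ ⟪v, β⟫ < 0 := by
  rw [← neg_pos, ← pairing_neg_right, pairing_pos_iff, inner_neg_right, neg_pos]

lemma pairing_nonneg_iff (v β : V) : 0 ≤ D.pairing v β ↔ 0 ≤ ⟪v, β⟫ := by
  rw [← not_lt, pairing_neg_iff, not_lt]

lemma pairing_eq_zero_iff (v β : V) : D.pairing v β = 0 ↔ ⟪v, β⟫ = 0 := by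
  rw [le_antisymm_iff, le_antisymm_iff, ← not_lt, pairing_pos_iff, not_lt, pairing_nonneg_iff]

lemma pairing_sub_left (u v β : V) : D.pairing (u - v) β = D.pairing u β - D.pairing v β := by
  rw [pairing, pairing, pairing, inner_sub_left, mul_sub, sub_div]

end Pairing

section WeylGroup

variable (D : RootSystemWithBase V)

/-- The reflection `s_β`, as an element of the group `V ≃ₗ[ℝ] V` containing `W`. -/
noncomputable def reflection (β : V) : V ≃ₗ[ℝ] V := (ℝ ∙ β)ᗮ.reflection.toLinearEquiv

lemma reflection_apply (β v : V) : reflection β v = v - D.pairing v β • β := by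
  change (ℝ ∙ β)ᗮ.reflection v = _
  rw [Submodule.reflection_orthogonal_apply, Submodule.reflection_singleton_apply, neg_sub,
    pairing, real_inner_self_eq_norm_sq, real_inner_comm, mul_div_assoc, mul_smul, two_smul ℝ,
    ← two_nsmul]
  rfl

lemma s_eq_reflection (i : Fin D.l) : D.s i = reflection (D.α i) := by
  ext v
  rw [D.reflection_apply, s_apply, pairing]

lemma s_mul_apply (i : Fin D.l) (w : V ≃ₗ[ℝ] V) (v : V) :
    (D.s i * w) v = w v - D.pairing (w v) (D.α i) • D.α i :=
  D.s_apply i (w v)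

lemma s_α (i : Fin D.l) : D.s i (D.α i) = -D.α i := by
  rw [s_eq_reflection]
  exact Submodule.reflection_orthogonalComplement_singleton_eq_neg (D.α i)

lemma s_mul_s (i : Fin D.l) : D.s i * D.s i = 1 := by
  ext v
  change D.s i (D.s i v) = v
  rw [s_eq_reflection]
  exact Submodule.reflection_reflection (ℝ ∙ D.α i)ᗮ v

lemma s_inv (i : Fin D.l) : (D.s i)⁻¹ = D.s i :=
  inv_eq_of_mul_eq_one_left (D.s_mul_s i)

lemma s_mul_s_mul (i : Fin D.l) (w : V ≃ₗ[ℝ] V) : D.s i * (D.s i * w) = w := by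
  rw [← mul_assoc, s_mul_s, one_mul]

lemma s_mem_W (i : Fin D.l) : D.s i ∈ D.W :=
  Subgroup.subset_closure ⟨i, rfl⟩

variable {D}

@[elab_as_elim]
lemma W_induction {p : (w : V ≃ₗ[ℝ] V) → w ∈ D.W → Prop} (one : p 1 D.W.one_mem)
    (s_mul : ∀ i w hw, p w hw → p (D.s i * w) (D.W.mul_mem (D.s_mem_W i) hw))
    {w : V ≃ₗ[ℝ] V} (hw : w ∈ D.W) : p w hw := by
  induction hw using Subgroup.closure_induction_left with
  | one => exact one
  | mul_left x hx y hy ih =>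
    obtain ⟨i, rfl⟩ := hx
    exact s_mul i y hy ih
  | inv_mul_cancel x hx y hy ih =>
    obtain ⟨i, rfl⟩ := hx
    simpa only [s_inv] using s_mul i y hy ih

lemma inner_apply_apply {w : V ≃ₗ[ℝ] V} (hw : w ∈ D.W) (u v : V) : ⟪w u, w v⟫ = ⟪u, v⟫ := by
  induction hw using W_induction with
  | one => rfl
  | s_mul i w _ ih =>
    rw [← ih, s_eq_reflection]
    exact LinearIsometryEquiv.inner_map_map (ℝ ∙ D.α i)ᗮ.reflection (w u) (w v)

lemma apply_mem_Φ {w : V ≃ₗ[ℝ] V} (hw : w ∈ D.W) {β : V} (hβ : β ∈ D.Φ) : w β ∈ D.Φ := by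
  induction hw using W_induction with
  | one => exact hβ
  | s_mul i w _ ih => exact D.s_root _ ih i

lemma pairing_apply_apply {w : V ≃ₗ[ℝ] V} (hw : w ∈ D.W) (u v : V) :
    D.pairing (w u) (w v) = D.pairing u v := by
  simp only [pairing, inner_apply_apply hw]

lemma pairing_apply_left {w : V ≃ₗ[ℝ] V} (hw : w ∈ D.W) (u v : V) :
    D.pairing (w u) v = D.pairing u (w⁻¹ v) := by
  rw [← pairing_apply_apply hw u, LinearEquiv.coe_inv, LinearEquiv.apply_symm_apply]

lemma mul_reflection {w : V ≃ₗ[ℝ] V} (hw : w ∈ D.W) (β : V) :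
    w * reflection β = reflection (w β) * w := by
  ext v
  change w (reflection β v) = reflection (w β) (w v)
  rw [D.reflection_apply, D.reflection_apply, map_sub, map_smul, pairing_apply_apply hw]

/-- Outside the line of `α i`, the reflection `s i` does not change the coefficients of a root,
and one positive coefficient makes a root positive. -/
lemma IsNonnegComb.s_apply {β : V} (hβ : D.IsNonnegComb β) (hβΦ : β ∈ D.Φ) {i : Fin D.l}
    (hne : β ≠ D.α i) : D.IsNonnegComb (D.s i β) := by
  refine (isNonnegComb_or_neg (D.s_root β hβΦ i)).resolve_right fun hneg => hne ?_
  rw [isNonnegComb_iff_repr] at hβ hneg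
  have repr_eq_zero (j : Fin D.l) (hj : j ≠ i) : D.simpleBasis.repr β j = 0 := by
    have := hneg j
    simp only [D.s_apply, repr_α, map_neg, map_sub, map_smul, Finsupp.neg_apply,
      Finsupp.sub_apply, Finsupp.smul_apply, Finsupp.single_eq_of_ne hj, smul_zero, sub_zero,
      Left.nonneg_neg_iff] at this
    exact le_antisymm this (hβ j)
  have β_eq : β = D.simpleBasis.repr β i • D.α i := by
    conv_lhs => rw [← D.sum_repr_smul_α β]
    exact Finset.sum_eq_single i (fun j _ hj => by rw [repr_eq_zero j hj, zero_smul]) (by simp)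
  rcases D.reduced _ (D.α_mem i) _ (β_eq ▸ hβΦ) with h | h
  · rw [β_eq, h, one_smul]
  · linarith [hβ i]

end WeylGroup

section Length

variable (D : RootSystemWithBase V)

lemma wordProd_cons (i : Fin D.l) (L : List (Fin D.l)) :
    D.wordProd (i :: L) = D.s i * D.wordProd L := by
  simp only [wordProd, List.map_cons, List.prod_cons]

lemma wordProd_append (L M : List (Fin D.l)) :
    D.wordProd (L ++ M) = D.wordProd L * D.wordProd M := by
  simp only [wordProd, List.map_append, List.prod_append]

lemma wordProd_mem_W (L : List (Fin D.l)) : D.wordProd L ∈ D.W :=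
  list_prod_mem (by simpa using fun i _ => D.s_mem_W i)

lemma len_wordProd_le (L : List (Fin D.l)) : D.len (D.wordProd L) ≤ L.length :=
  Nat.sInf_le ⟨L, rfl, rfl⟩

lemma len_one : D.len 1 = 0 :=
  Nat.le_zero.mp (D.len_wordProd_le [])

lemma len_s_le (i : Fin D.l) : D.len (D.s i) ≤ 1 := by
  simpa [wordProd] using D.len_wordProd_le [i]

variable {D}

lemma exists_reduced_word {w : V ≃ₗ[ℝ] V} (hw : w ∈ D.W) :
    ∃ L : List (Fin D.l), L.length = D.len w ∧ D.wordProd L = w := by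
  have exists_word : ∃ L : List (Fin D.l), D.wordProd L = w := by
    induction hw using W_induction with
    | one => exact ⟨[], rfl⟩
    | s_mul i w _ ih =>
      obtain ⟨L, rfl⟩ := ih
      exact ⟨i :: L, D.wordProd_cons i L⟩
  obtain ⟨L, hL⟩ := exists_word
  exact Nat.sInf_mem (s := {k | ∃ L : List (Fin D.l), L.length = k ∧ D.wordProd L = w})
    ⟨_, L, rfl, hL⟩

lemma len_mul_le {w u : V ≃ₗ[ℝ] V} (hw : w ∈ D.W) (hu : u ∈ D.W) :
    D.len (w * u) ≤ D.len w + D.len u := by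
  obtain ⟨L, hL, rfl⟩ := exists_reduced_word hw
  obtain ⟨M, hM, rfl⟩ := exists_reduced_word hu
  rw [← wordProd_append, ← hL, ← hM, ← List.length_append]
  exact D.len_wordProd_le _

lemma len_s_mul_le (i : Fin D.l) {w : V ≃ₗ[ℝ] V} (hw : w ∈ D.W) :
    D.len (D.s i * w) ≤ D.len w + 1 := by
  linarith [len_mul_le (D.s_mem_W i) hw, D.len_s_le i]

lemma len_mul_s_le {w : V ≃ₗ[ℝ] V} (hw : w ∈ D.W) (i : Fin D.l) :
    D.len (w * D.s i) ≤ D.len w + 1 := by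
  linarith [len_mul_le hw (D.s_mem_W i), D.len_s_le i]

/-- The exchange condition. The deleted letter `j` is the one at which the positive root `β`,
carried along the word, becomes the simple root `α j`; only there can it turn negative. -/
lemma exists_wordProd_eq_reflection_mul (L : List (Fin D.l)) {β : V} (hβΦ : β ∈ D.Φ)
    (hβ : D.IsNonnegComb β) (hneg : D.IsNonnegComb (-((D.wordProd L)⁻¹ β))) :
    ∃ M : List (Fin D.l), M.length + 1 = L.length ∧
      D.wordProd M = reflection β * D.wordProd L := by
  induction L generalizing β with
  | nil => exact absurd (hβ.eq_zero_of_neg hneg) (D.root_ne_zero β hβΦ)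
  | cons j L ih =>
    rcases eq_or_ne β (D.α j) with rfl | hj
    · exact ⟨L, rfl, by rw [wordProd_cons, ← s_eq_reflection, s_mul_s_mul]⟩
    · rw [wordProd_cons, mul_inv_rev, s_inv] at hneg
      obtain ⟨M, hlen, hM⟩ := ih (D.s_root β hβΦ j) (hβ.s_apply hβΦ hj) hneg
      refine ⟨j :: M, by simp only [List.length_cons, hlen], ?_⟩
      have sβ : reflection (D.s j β) = D.s j * reflection β * D.s j := by
        rw [mul_reflection (D.s_mem_W j), mul_assoc, s_mul_s, mul_one]
      rw [wordProd_cons, wordProd_cons, hM, sβ, mul_assoc, mul_assoc, s_mul_s_mul]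

lemma len_s_mul_of_neg {w : V ≃ₗ[ℝ] V} (hw : w ∈ D.W) {i : Fin D.l}
    (hneg : D.IsNonnegComb (-(w⁻¹ (D.α i)))) : D.len (D.s i * w) + 1 = D.len w := by
  apply le_antisymm
  · obtain ⟨L, hL, rfl⟩ := exists_reduced_word hw
    obtain ⟨M, hM, hMprod⟩ :=
      exists_wordProd_eq_reflection_mul L (D.α_mem i) (D.isNonnegComb_α i) hneg
    rw [s_eq_reflection, ← hMprod, ← hL, ← hM]
    exact Nat.succ_le_succ (D.len_wordProd_le M)
  · simpa only [s_mul_s_mul] using len_s_mul_le i (D.W.mul_mem (D.s_mem_W i) hw)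

lemma len_s_mul_of_nonneg {w : V ≃ₗ[ℝ] V} (hw : w ∈ D.W) {i : Fin D.l}
    (hpos : D.IsNonnegComb (w⁻¹ (D.α i))) : D.len (D.s i * w) = D.len w + 1 := by
  have hneg : D.IsNonnegComb (-((D.s i * w)⁻¹ (D.α i))) := by
    rw [mul_inv_rev, s_inv]
    change D.IsNonnegComb (-(w⁻¹ (D.s i (D.α i))))
    rwa [s_α, map_neg, neg_neg]
  simpa only [s_mul_s_mul] using
    (len_s_mul_of_neg (D.W.mul_mem (D.s_mem_W i) hw) hneg).symm

lemma eq_one_of_forall_nonneg {w : V ≃ₗ[ℝ] V} (hw : w ∈ D.W)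
    (h : ∀ i, D.IsNonnegComb (w⁻¹ (D.α i))) : w = 1 := by
  obtain ⟨L, hL, rfl⟩ := exists_reduced_word hw
  cases L with
  | nil => rfl
  | cons i L =>
    have hlen := len_s_mul_of_nonneg hw (h i)
    rw [← hL, wordProd_cons, s_mul_s_mul, List.length_cons] at hlen
    have := D.len_wordProd_le L
    omega

end Length

section Dominant

variable {D : RootSystemWithBase V} {ω : V}

lemma IsDominant.pairing_nonneg (hω : D.IsDominant ω) {v : V} (hv : D.IsNonnegComb v) :
    0 ≤ D.pairing ω v := by
  rw [pairing_nonneg_iff, D.inner_eq_sum_repr]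
  exact Finset.sum_nonneg fun i _ =>
    mul_nonneg (D.isNonnegComb_iff_repr.mp hv i) ((D.pairing_nonneg_iff _ _).mp (hω i))

lemma IsDominant.isNonnegComb_of_pairing_pos (hω : D.IsDominant ω) {β : V} (hβ : β ∈ D.Φ)
    (h : 0 < D.pairing ω β) : D.IsNonnegComb β := by
  refine (isNonnegComb_or_neg hβ).resolve_right fun hneg => ?_
  linarith [hω.pairing_nonneg hneg, D.pairing_neg_right ω β]

lemma IsDominant.isNonnegComb_neg_of_pairing_neg (hω : D.IsDominant ω) {β : V} (hβ : β ∈ D.Φ)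
    (h : D.pairing ω β < 0) : D.IsNonnegComb (-β) :=
  (isNonnegComb_or_neg hβ).resolve_left fun hpos => h.not_ge (hω.pairing_nonneg hpos)

lemma IsDominant.len_s_mul_of_pairing_pos (hω : D.IsDominant ω) {w : V ≃ₗ[ℝ] V} (hw : w ∈ D.W)
    {i : Fin D.l} (h : 0 < D.pairing (w ω) (D.α i)) : D.len (D.s i * w) = D.len w + 1 := by
  rw [pairing_apply_left hw] at h
  exact len_s_mul_of_nonneg hw
    (hω.isNonnegComb_of_pairing_pos (apply_mem_Φ (D.W.inv_mem hw) (D.α_mem i)) h)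

lemma IsDominant.len_s_mul_of_pairing_neg (hω : D.IsDominant ω) {w : V ≃ₗ[ℝ] V} (hw : w ∈ D.W)
    {i : Fin D.l} (h : D.pairing (w ω) (D.α i) < 0) : D.len (D.s i * w) + 1 = D.len w := by
  rw [pairing_apply_left hw] at h
  exact len_s_mul_of_neg hw
    (hω.isNonnegComb_neg_of_pairing_neg (apply_mem_Φ (D.W.inv_mem hw) (D.α_mem i)) h)

lemma IsDominant.vle_s_mul_of_len_lt (hω : D.IsDominant ω) {w : V ≃ₗ[ℝ] V} (hw : w ∈ D.W)
    {i : Fin D.l} (h : D.len w < D.len (D.s i * w)) : D.vle ((D.s i * w) ω) (w ω) := by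
  have hpair : 0 ≤ D.pairing (w ω) (D.α i) := by
    by_contra! hneg
    linarith [hω.len_s_mul_of_pairing_neg hw hneg]
  rw [vle, s_mul_apply, sub_sub_cancel]
  exact (D.isNonnegComb_α i).smul hpair

lemma IsDominant.vle_wordProd_mul (hω : D.IsDominant ω) {σ : V ≃ₗ[ℝ] V} (hσ : σ ∈ D.W)
    (L : List (Fin D.l)) (h : D.len σ + L.length ≤ D.len (D.wordProd L * σ)) :
    D.vle ((D.wordProd L * σ) ω) (σ ω) := by
  induction L with
  | nil =>
    change D.IsNonnegComb (σ ω - σ ω)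
    rw [sub_self]
    exact D.isNonnegComb_zero
  | cons i L ih =>
    rw [List.length_cons, wordProd_cons, mul_assoc] at h
    rw [wordProd_cons, mul_assoc]
    have hW : D.wordProd L * σ ∈ D.W := D.W.mul_mem (D.wordProd_mem_W L) hσ
    have len_le := len_s_mul_le i hW
    have len_le' := len_mul_le (D.wordProd_mem_W L) hσ
    have len_word := D.len_wordProd_le L
    exact (hω.vle_s_mul_of_len_lt hW (by omega)).trans (ih (by omega))

lemma IsDominant.vle_of_len_eq (hω : D.IsDominant ω) {τ σ : V ≃ₗ[ℝ] V} (hτ : τ ∈ D.W)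
    (hσ : σ ∈ D.W) (h : D.len τ = D.len σ + D.len (τ * σ⁻¹)) : D.vle (τ ω) (σ ω) := by
  obtain ⟨L, hL, hprod⟩ := exists_reduced_word (D.W.mul_mem hτ (D.W.inv_mem hσ))
  have := hω.vle_wordProd_mul hσ L
  rw [hprod, inv_mul_cancel_right, hL] at this
  exact this h.ge

lemma IsDominant.isNonnegComb_apply_of_mem_WI (hω : D.IsDominant ω) {w : V ≃ₗ[ℝ] V}
    (hw : w ∈ D.WI ω) {v : V} (hv : D.IsNonnegComb v) (h : D.pairing ω v = 0) :
    D.IsNonnegComb (w v) := by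
  have hv' := D.isNonnegComb_iff_repr.mp hv
  rw [pairing_eq_zero_iff, D.inner_eq_sum_repr, Finset.sum_eq_zero_iff_of_nonneg
    fun i _ => mul_nonneg (hv' i) ((D.pairing_nonneg_iff _ _).mp (hω i))] at h
  rw [← D.sum_repr_smul_α v, map_sum]
  refine IsNonnegComb.sum fun i hi => ?_
  rw [map_smul]
  rcases mul_eq_zero.mp (h i hi) with hrepr | hinner
  · rw [hrepr, zero_smul]
    exact D.isNonnegComb_zero
  · exact (hw.2 i ((D.pairing_eq_zero_iff _ _).mpr hinner)).1.smul (hv' i)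

lemma IsDominant.isNonnegComb_of_apply_of_mem_WI (hω : D.IsDominant ω) {w : V ≃ₗ[ℝ] V}
    (hw : w ∈ D.WI ω) {β : V} (hβ : β ∈ D.Φ) (h : D.pairing ω β = 0)
    (hwβ : D.IsNonnegComb (w β)) : D.IsNonnegComb β := by
  refine (isNonnegComb_or_neg hβ).resolve_right fun hneg => ?_
  have hwneg : D.IsNonnegComb (-(w β)) := by
    rw [← map_neg]
    exact hω.isNonnegComb_apply_of_mem_WI hw hneg (by rw [pairing_neg_right, h, neg_zero])
  exact D.root_ne_zero _ (apply_mem_Φ hw.1 hβ) (hwβ.eq_zero_of_neg hwneg)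

lemma IsDominant.injOn_WI (hω : D.IsDominant ω) : Set.InjOn (fun w => w ω) (D.WI ω) := by
  intro τ hτ σ hσ (h : τ ω = σ ω)
  have hW : τ⁻¹ * σ ∈ D.W := D.W.mul_mem (D.W.inv_mem hτ.1) hσ.1
  suffices σ⁻¹ * τ = 1 from (inv_mul_eq_one.mp this).symm
  refine eq_one_of_forall_nonneg (D.W.mul_mem (D.W.inv_mem hσ.1) hτ.1) fun i => ?_
  rw [mul_inv_rev, inv_inv]
  have root : (τ⁻¹ * σ) (D.α i) ∈ D.Φ := apply_mem_Φ hW (D.α_mem i)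
  have τ_apply : τ ((τ⁻¹ * σ) (D.α i)) = σ (D.α i) := LinearEquiv.apply_symm_apply τ _
  have pairing_eq : D.pairing ω ((τ⁻¹ * σ) (D.α i)) = D.pairing ω (D.α i) := by
    rw [← pairing_apply_apply hτ.1, τ_apply, h, pairing_apply_apply hσ.1]
  rcases (hω i).lt_or_eq with hpos | hzero
  · exact hω.isNonnegComb_of_pairing_pos root (pairing_eq ▸ hpos)
  · refine hω.isNonnegComb_of_apply_of_mem_WI hτ root (pairing_eq.trans hzero.symm) ?_
    rw [τ_apply]
    exact (hσ.2 i hzero.symm).1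

lemma s_mul_mem_WI {w : V ≃ₗ[ℝ] V} (hw : w ∈ D.WI ω) {i : Fin D.l}
    (h : D.pairing (w ω) (D.α i) ≠ 0) : D.s i * w ∈ D.WI ω := by
  refine ⟨D.W.mul_mem (D.s_mem_W i) hw.1, fun j hj => ?_⟩
  have root : w (D.α j) ∈ D.Φ := apply_mem_Φ hw.1 (D.α_mem j)
  have hne : w (D.α j) ≠ D.α i := by
    intro heq
    rw [← heq, pairing_apply_apply hw.1] at h
    exact h hj
  exact ⟨(hw.2 j hj).1.s_apply root hne, D.root_ne_zero _ (D.s_root _ root i)⟩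

end Dominant

section Minuscule

variable {D : RootSystemWithBase V} {ω : V}

lemma sub_apply_mem_rootLattice (hω : ∀ β ∈ D.Φ, ∃ z : ℤ, D.pairing ω β = z)
    {w : V ≃ₗ[ℝ] V} (hw : w ∈ D.W) : ω - w ω ∈ D.rootLattice := by
  induction hw using W_induction with
  | one =>
    change ω - ω ∈ _
    rw [sub_self]
    exact zero_mem _
  | s_mul i w hw ih =>
    obtain ⟨z, hz⟩ := hω _ (apply_mem_Φ (D.W.inv_mem hw) (D.α_mem i))
    rw [s_mul_apply, pairing_apply_left hw, hz, ← sub_add, Int.cast_smul_eq_zsmul]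
    exact add_mem ih (Submodule.smul_mem _ z (Submodule.subset_span ⟨i, rfl⟩))

lemma IsMinuscule.exists_pairing_eq_intCast (hω : D.IsMinuscule ω) {β : V} (hβ : β ∈ D.Φ) :
    ∃ z : ℤ, D.pairing ω β = z := by
  rcases hω.2 β hβ with h | h | h
  · exact ⟨-1, by simp [h]⟩
  · exact ⟨0, by simp [h]⟩
  · exact ⟨1, by simp [h]⟩

lemma IsMinuscule.apply_sub_apply_mem_rootLattice (hω : D.IsMinuscule ω) {τ σ : V ≃ₗ[ℝ] V}
    (hτ : τ ∈ D.W) (hσ : σ ∈ D.W) : σ ω - τ ω ∈ D.rootLattice := by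
  have hmem {w : V ≃ₗ[ℝ] V} (hw : w ∈ D.W) : ω - w ω ∈ D.rootLattice :=
    sub_apply_mem_rootLattice (fun _ => hω.exists_pairing_eq_intCast) hw
  simpa only [sub_sub_sub_cancel_left] using sub_mem (hmem hτ) (hmem hσ)

lemma IsMinuscule.pairing_apply (hω : D.IsMinuscule ω) {w : V ≃ₗ[ℝ] V} (hw : w ∈ D.W)
    {β : V} (hβ : β ∈ D.Φ) :
    D.pairing (w ω) β = -1 ∨ D.pairing (w ω) β = 0 ∨ D.pairing (w ω) β = 1 := by
  rw [pairing_apply_left hw]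
  exact hω.2 _ (apply_mem_Φ (D.W.inv_mem hw) hβ)

lemma IsMinuscule.exists_pairing_eq_one_or_neg_one (hω : D.IsMinuscule ω) {τ σ : V ≃ₗ[ℝ] V}
    (hτ : τ ∈ D.W) (hσ : σ ∈ D.W) (hle : D.vle (τ ω) (σ ω)) (hne : σ ω - τ ω ≠ 0) :
    ∃ i, D.vle (τ ω) (σ ω - D.α i) ∧
      (D.pairing (σ ω) (D.α i) = 1 ∨ D.pairing (τ ω) (D.α i) = -1) := by
  obtain ⟨i, hrepr, hinner⟩ := IsNonnegComb.exists_inner_pos hle hne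
  refine ⟨i, ?_, ?_⟩
  · rw [vle, sub_right_comm]
    exact IsNonnegComb.sub_α hle (hω.apply_sub_apply_mem_rootLattice hτ hσ) hrepr
  · rw [← D.pairing_pos_iff, pairing_sub_left] at hinner
    have hσi := hω.pairing_apply hσ (D.α_mem i)
    have hτi := hω.pairing_apply hτ (D.α_mem i)
    grind

lemma len_add_len_mul_inv_le_of_s_mul_right {τ σ : V ≃ₗ[ℝ] V} (hτ : τ ∈ D.W) (hσ : σ ∈ D.W)
    {i : Fin D.l} (hlen : D.len (D.s i * σ) = D.len σ + 1)
    (h : D.len (D.s i * σ) + D.len (τ * (D.s i * σ)⁻¹) ≤ D.len τ) :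
    D.len σ + D.len (τ * σ⁻¹) ≤ D.len τ := by
  have := len_mul_s_le (D.W.mul_mem hτ (D.W.inv_mem (D.W.mul_mem (D.s_mem_W i) hσ))) i
  rw [mul_inv_rev, ← mul_assoc, inv_mul_cancel_right] at this
  rw [mul_inv_rev, ← mul_assoc] at h
  omega

lemma len_add_len_mul_inv_le_of_s_mul_left {τ σ : V ≃ₗ[ℝ] V} (hτ : τ ∈ D.W) (hσ : σ ∈ D.W)
    {i : Fin D.l} (hlen : D.len (D.s i * τ) + 1 = D.len τ)
    (h : D.len σ + D.len (D.s i * τ * σ⁻¹) ≤ D.len (D.s i * τ)) :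
    D.len σ + D.len (τ * σ⁻¹) ≤ D.len τ := by
  have := len_s_mul_le i (D.W.mul_mem (D.W.mul_mem (D.s_mem_W i) hτ) (D.W.inv_mem hσ))
  rw [mul_assoc, s_mul_s_mul] at this
  rw [mul_assoc] at h
  omega

lemma IsMinuscule.len_add_len_mul_inv_le_of_height (hω : D.IsMinuscule ω) {τ σ : V ≃ₗ[ℝ] V}
    (hτ : τ ∈ D.WI ω) (hσ : σ ∈ D.WI ω) (hle : D.vle (τ ω) (σ ω)) {m : ℕ}
    (hm : D.height (σ ω - τ ω) = m) : D.len σ + D.len (τ * σ⁻¹) ≤ D.len τ := by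
  induction m generalizing τ σ with
  | zero =>
    have heq : τ ω = σ ω := (sub_eq_zero.mp (hle.eq_zero_of_height (by simpa using hm))).symm
    obtain rfl := hω.1.injOn_WI hτ hσ heq
    rw [mul_inv_cancel, len_one, add_zero]
  | succ m ih =>
    have hne : σ ω - τ ω ≠ 0 := fun h => by
      rw [h, map_zero] at hm
      exact Nat.cast_ne_zero.mpr m.succ_ne_zero hm.symm
    obtain ⟨i, hi, hpair⟩ := hω.exists_pairing_eq_one_or_neg_one hτ.1 hσ.1 hle hne
    have hheight : D.height (σ ω - τ ω - D.α i) = m := by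
      rw [map_sub, hm, height_α, Nat.cast_succ, add_sub_cancel_right]
    rcases hpair with hσi | hτi
    · have hs : (D.s i * σ) ω = σ ω - D.α i := by rw [s_mul_apply, hσi, one_smul]
      refine len_add_len_mul_inv_le_of_s_mul_right hτ.1 hσ.1
        (hω.1.len_s_mul_of_pairing_pos hσ.1 (hσi ▸ one_pos))
        (ih hτ (s_mul_mem_WI hσ (hσi ▸ one_ne_zero)) (hs ▸ hi) ?_)
      rwa [hs, sub_right_comm]
    · have hs : (D.s i * τ) ω = τ ω + D.α i := by
        rw [s_mul_apply, hτi, neg_one_smul, sub_neg_eq_add]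
      refine len_add_len_mul_inv_le_of_s_mul_left hτ.1 hσ.1
        (hω.1.len_s_mul_of_pairing_neg hτ.1 (by linarith))
        (ih (s_mul_mem_WI hτ (by linarith)) hσ ?_ ?_)
      · rwa [vle, hs, ← sub_sub, sub_right_comm]
      · rwa [hs, ← sub_sub]

lemma IsMinuscule.len_eq_of_vle (hω : D.IsMinuscule ω) {τ σ : V ≃ₗ[ℝ] V} (hτ : τ ∈ D.WI ω)
    (hσ : σ ∈ D.WI ω) (hle : D.vle (τ ω) (σ ω)) : D.len τ = D.len σ + D.len (τ * σ⁻¹) := by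
  obtain ⟨m, hm⟩ := IsNonnegComb.exists_height_eq_natCast hle
    (hω.apply_sub_apply_mem_rootLattice hτ.1 hσ.1)
  refine le_antisymm ?_ (hω.len_add_len_mul_inv_le_of_height hτ hσ hle hm)
  have := len_mul_le (D.W.mul_mem hτ.1 (D.W.inv_mem hσ.1)) hσ.1
  rwa [inv_mul_cancel_right, add_comm] at this

end Minuscule

end RootSystemWithBase

/-- Let `ω` be a minuscule weight and `τ, σ ∈ W^I`.  Then
`τ(ω) ≤ σ(ω)` (difference a nonnegative combination of simple roots) if and only if
`σ ≤ τ`, i.e. `ℓ(τ) = ℓ(σ) + ℓ(τ σ⁻¹)`. -/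
theorem stmt7 {V : Type*} [NormedAddCommGroup V] [InnerProductSpace ℝ V]
    (D : RootSystemWithBase V) (ω : V) (hω : D.IsMinuscule ω)
    (τ σ : V ≃ₗ[ℝ] V) (hτ : τ ∈ D.WI ω) (hσ : σ ∈ D.WI ω) :
    D.vle (τ ω) (σ ω) ↔ D.len τ = D.len σ + D.len (τ * σ⁻¹) :=
  ⟨hω.len_eq_of_vle hτ hσ, hω.1.vle_of_len_eq hτ.1 hσ.1⟩
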